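/- Fix additionally p ∈ ℝ^N and ρ ∈ ℝ, and assume μ > 0, α ≥ 0 and ρ + μ > α. Set ε = 1 + ρ/μ − α/μ and φ = Aᵀ·(ϱ − e₁ − (1/μ)y₁) + (e₂ − (1/μ)y₂) + (ρ/μ)p − (1/μ)(λ + (α/2)𝟙). Then the matrix AᵀA + εI is positive definite (hence invertible), the function F(v) = L_μ(v) + (ρ/2)‖v − p‖² has a unique global minimizer v* over ℝ^N, and v* is the unique solution of the linear system (AᵀA + εI)·v = φ; equivalently v* = (AᵀA + εI)⁻¹·φ (the closed-form v-update (34)–(35) of the proximal-ADMM decoder). -/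

import Mathlib

open Matrix

/-!
Each quadratic penalty expands as a quadratic form plus a linear one, so up to an additive constant
the proximal objective is `μ` times the quadratic energy `½ ⟨v, B v⟩ - ⟨φ, v⟩` of
`B = AᵀA + εI`. Since `ε = (ρ + μ - α) / μ > 0`, `B` is positive definite, and the minimizers of
the energy are the zeros of its gradient `B v - φ`.
-/

section LinearAlgebra

variable {m n R : Type*} [DecidableEq n] [CommRing R]

theorem mulVec_eq_iff_eq_inv_mulVec [Fintype n] {B : Matrix n n R} (hB : IsUnit B) {v b : n → R} :
    B *ᵥ v = b ↔ v = B⁻¹ *ᵥ b := by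
  have hdet : IsUnit B.det := (isUnit_iff_isUnit_det B).1 hB
  constructor
  · rintro rfl
    rw [mulVec_mulVec, nonsing_inv_mul _ hdet, one_mulVec]
  · rintro rfl
    rw [mulVec_mulVec, mul_nonsing_inv _ hdet, one_mulVec]

theorem posDef_transpose_mul_self_add_smul_one [Fintype m] [Finite n] [LinearOrder R]
    [IsStrictOrderedRing R] [StarRing R] [TrivialStar R] (A : Matrix m n R) {ε : R} (hε : 0 < ε) :
    (Aᵀ * A + ε • (1 : Matrix n n R)).PosDef := by
  cases nonempty_fintype n
  refine .of_dotProduct_mulVec_pos ?_ fun x hx => ?_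
  · simp [IsHermitian, conjTranspose_eq_transpose_of_trivial]
  have hsq : star x ⬝ᵥ ((Aᵀ * A + ε • (1 : Matrix n n R)) *ᵥ x)
      = (A *ᵥ x) ⬝ᵥ (A *ᵥ x) + ε * (x ⬝ᵥ x) := by
    rw [star_trivial, add_mulVec, smul_mulVec, one_mulVec, dotProduct_add, dotProduct_smul,
      smul_eq_mul, ← mulVec_mulVec, dotProduct_transpose_mulVec]
  have hx_pos : 0 < x ⬝ᵥ x :=
    (Finset.sum_nonneg fun i _ => mul_self_nonneg (x i)).lt_of_ne'
      (dotProduct_self_eq_zero.not.2 hx)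
  rw [hsq]
  exact add_pos_of_nonneg_of_pos (Finset.sum_nonneg fun j _ => mul_self_nonneg _)
    (mul_pos hε hx_pos)

end LinearAlgebra

section QuadraticEnergy

variable {m n 𝕜 : Type*} [Fintype n] [Field 𝕜]

/-- The quadratic energy `½ ⟨v, B v⟩ - ⟨b, v⟩`, whose gradient is `B v - b` when `B` is
symmetric; solving `B v = b` amounts to finding its critical points. -/
def quadraticEnergy (B : Matrix n n 𝕜) (b v : n → 𝕜) : 𝕜 :=
  v ⬝ᵥ (B *ᵥ v) / 2 - b ⬝ᵥ v

theorem quadraticEnergy_add_add (B B' : Matrix n n 𝕜) (b b' v : n → 𝕜) :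
    quadraticEnergy (B + B') (b + b') v = quadraticEnergy B b v + quadraticEnergy B' b' v := by
  simp only [quadraticEnergy, add_mulVec, dotProduct_add, add_dotProduct]
  ring

theorem quadraticEnergy_smul_smul (c : 𝕜) (B : Matrix n n 𝕜) (b v : n → 𝕜) :
    quadraticEnergy (c • B) (c • b) v = c * quadraticEnergy B b v := by
  simp only [quadraticEnergy, smul_mulVec, dotProduct_smul, smul_dotProduct, smul_eq_mul]
  ring

theorem quadraticEnergy_zero_neg (b v : n → 𝕜) : quadraticEnergy 0 (-b) v = b ⬝ᵥ v := by
  simp [quadraticEnergy]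

theorem quadraticEnergy_add_right [NeZero (2 : 𝕜)] {B : Matrix n n 𝕜} (hB : B.IsSymm)
    (b v d : n → 𝕜) :
    quadraticEnergy B b (v + d)
      = quadraticEnergy B b v + d ⬝ᵥ (B *ᵥ v - b) + d ⬝ᵥ (B *ᵥ d) / 2 := by
  have hcross : v ⬝ᵥ (B *ᵥ d) = d ⬝ᵥ (B *ᵥ v) := by
    simpa only [hB.eq] using dotProduct_transpose_mulVec B v d
  simp only [quadraticEnergy, mulVec_add, dotProduct_add, add_dotProduct, dotProduct_sub, hcross,
    dotProduct_comm b d]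
  field_simp
  ring

theorem multiplier_add_penalty_eq_quadraticEnergy [NeZero (2 : 𝕜)] [Fintype m] (A : Matrix m n 𝕜)
    (c y : m → 𝕜) (μ : 𝕜) (v : n → 𝕜) :
    y ⬝ᵥ (A *ᵥ v - c) + μ / 2 * ((A *ᵥ v - c) ⬝ᵥ (A *ᵥ v - c))
      = quadraticEnergy (μ • (Aᵀ * A)) (Aᵀ *ᵥ (μ • c - y)) v + (μ / 2 * (c ⬝ᵥ c) - y ⬝ᵥ c) := by
  have hquad : v ⬝ᵥ ((Aᵀ * A) *ᵥ v) = (A *ᵥ v) ⬝ᵥ (A *ᵥ v) := by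
    rw [← mulVec_mulVec, dotProduct_transpose_mulVec]
  have hlin : (Aᵀ *ᵥ (μ • c - y)) ⬝ᵥ v = (μ • c - y) ⬝ᵥ (A *ᵥ v) := by
    rw [dotProduct_comm, dotProduct_transpose_mulVec]
  simp only [quadraticEnergy, smul_mulVec, dotProduct_smul, hquad, hlin, dotProduct_sub,
    sub_dotProduct, smul_dotProduct, smul_eq_mul, dotProduct_comm (A *ᵥ v) c]
  field_simp
  ring

theorem multiplier_add_penalty_eq_quadraticEnergy_smul_one [NeZero (2 : 𝕜)] [DecidableEq n]
    (c y : n → 𝕜) (μ : 𝕜) (v : n → 𝕜) :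
    y ⬝ᵥ (v - c) + μ / 2 * ((v - c) ⬝ᵥ (v - c))
      = quadraticEnergy (μ • 1) (μ • c - y) v + (μ / 2 * (c ⬝ᵥ c) - y ⬝ᵥ c) := by
  simpa only [transpose_one, mul_one, one_mulVec]
    using multiplier_add_penalty_eq_quadraticEnergy (1 : Matrix n n 𝕜) c y μ v

theorem penalty_eq_quadraticEnergy_smul_one [NeZero (2 : 𝕜)] [DecidableEq n]
    (c : n → 𝕜) (μ : 𝕜) (v : n → 𝕜) :
    μ / 2 * ((v - c) ⬝ᵥ (v - c)) = quadraticEnergy (μ • 1) (μ • c) v + μ / 2 * (c ⬝ᵥ c) := by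
  simpa only [zero_dotProduct, zero_add, sub_zero]
    using multiplier_add_penalty_eq_quadraticEnergy_smul_one c 0 μ v

theorem forall_quadraticEnergy_le_iff [LinearOrder 𝕜] [IsStrictOrderedRing 𝕜] [StarRing 𝕜]
    [TrivialStar 𝕜] {B : Matrix n n 𝕜} (hB : B.PosSemidef) {b v : n → 𝕜} :
    (∀ w, quadraticEnergy B b v ≤ quadraticEnergy B b w) ↔ B *ᵥ v = b := by
  have hsymm : B.IsSymm := (conjTranspose_eq_transpose_of_trivial B).symm.trans hB.isHermitian
  constructor
  · intro hmin
    set r := B *ᵥ v - b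
    -- Along the gradient direction the increment is a quadratic in `t` without constant term,
    -- so its discriminant is the square of the slope `⟨r, r⟩`.
    have hincr : ∀ t : 𝕜, 0 ≤ r ⬝ᵥ (B *ᵥ r) / 2 * (t * t) + r ⬝ᵥ r * t + 0 := by
      intro t
      have hline := hmin (v + t • r)
      rw [quadraticEnergy_add_right hsymm] at hline
      simp only [mulVec_smul, smul_dotProduct, dotProduct_smul, smul_eq_mul] at hline
      linear_combination hline
    have hdiscrim : (r ⬝ᵥ r) ^ 2 ≤ 0 := by
      simpa only [discrim, mul_zero, sub_zero] using discrim_le_zero hincr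
    have hr : r ⬝ᵥ r = 0 := (sq_nonpos_iff _).1 hdiscrim
    exact sub_eq_zero.1 (dotProduct_self_eq_zero.1 hr)
  · rintro rfl w
    have hnonneg : 0 ≤ (w - v) ⬝ᵥ (B *ᵥ (w - v)) := by
      simpa only [star_trivial] using hB.dotProduct_mulVec_nonneg (w - v)
    rw [← add_sub_cancel v w, quadraticEnergy_add_right hsymm, sub_self, dotProduct_zero, add_zero]
    exact le_add_of_nonneg_right (div_nonneg hnonneg zero_le_two)

end QuadraticEnergy

section ProximalObjective

variable {m n 𝕜 : Type*} [Fintype m] [Field 𝕜]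

/-- The right-hand side `φ` of the linear system solved in the `v`-update of the proximal-ADMM
decoder. -/
def vUpdateRHS (A : Matrix m n 𝕜) (lam : n → 𝕜) (ϱ e₁ y₁ : m → 𝕜) (e₂ y₂ p : n → 𝕜)
    (α μ ρ : 𝕜) : n → 𝕜 :=
  Aᵀ *ᵥ (fun j => ϱ j - e₁ j - y₁ j / μ) + (fun i => e₂ i - y₂ i / μ) + (ρ / μ) • p
    - (1 / μ) • fun i => lam i + α / 2

theorem smul_vUpdateRHS (A : Matrix m n 𝕜) (lam : n → 𝕜) (ϱ e₁ y₁ : m → 𝕜) (e₂ y₂ p : n → 𝕜)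
    {α μ ρ : 𝕜} (hμ : μ ≠ 0) :
    μ • vUpdateRHS A lam ϱ e₁ y₁ e₂ y₂ p α μ ρ
      = Aᵀ *ᵥ (μ • (ϱ - e₁) - y₁) + (μ • e₂ - y₂) + ρ • p + (-α) • (fun _ => 1 / 2) + -lam := by
  have hres : μ • (fun j => ϱ j - e₁ j - y₁ j / μ) = μ • (ϱ - e₁) - y₁ := by
    ext j
    simp only [Pi.smul_apply, Pi.sub_apply, smul_eq_mul]
    field_simp
  rw [← hres, mulVec_smul]
  ext i
  simp only [vUpdateRHS, Pi.smul_apply, Pi.sub_apply, Pi.add_apply, Pi.neg_apply, smul_eq_mul]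
  field_simp
  ring

variable [Fintype n]

/-- The augmented Lagrangian `L_μ` of the QP decoding model as a function of `v`, with every squared
Euclidean norm `‖x‖²` written as `x ⬝ᵥ x`. -/
def augmentedLagrangian (A : Matrix m n 𝕜) (lam : n → 𝕜) (ϱ e₁ y₁ : m → 𝕜) (e₂ y₂ : n → 𝕜)
    (α μ : 𝕜) (v : n → 𝕜) : 𝕜 :=
  lam ⬝ᵥ v - α / 2 * ((v - fun _ => 1 / 2) ⬝ᵥ (v - fun _ => 1 / 2))
    + y₁ ⬝ᵥ (A *ᵥ v + e₁ - ϱ) + y₂ ⬝ᵥ (v - e₂)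
    + μ / 2 * ((A *ᵥ v + e₁ - ϱ) ⬝ᵥ (A *ᵥ v + e₁ - ϱ)) + μ / 2 * ((v - e₂) ⬝ᵥ (v - e₂))

/-- The objective `L_μ(v) + (ρ/2) ‖v - p‖²` minimized in the `v`-update of the proximal-ADMM
decoder. -/
def proximalObjective (A : Matrix m n 𝕜) (lam : n → 𝕜) (ϱ e₁ y₁ : m → 𝕜) (e₂ y₂ p : n → 𝕜)
    (α μ ρ : 𝕜) (v : n → 𝕜) : 𝕜 :=
  augmentedLagrangian A lam ϱ e₁ y₁ e₂ y₂ α μ v + ρ / 2 * ((v - p) ⬝ᵥ (v - p))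

theorem exists_proximalObjective_eq_mul_quadraticEnergy_add [NeZero (2 : 𝕜)] [DecidableEq n]
    (A : Matrix m n 𝕜) (lam : n → 𝕜) (ϱ e₁ y₁ : m → 𝕜) (e₂ y₂ p : n → 𝕜) {α μ ρ : 𝕜} (hμ : μ ≠ 0) :
    ∃ C, ∀ v, proximalObjective A lam ϱ e₁ y₁ e₂ y₂ p α μ ρ v
      = μ * quadraticEnergy (Aᵀ * A + (1 + ρ / μ - α / μ) • (1 : Matrix n n 𝕜))
          (vUpdateRHS A lam ϱ e₁ y₁ e₂ y₂ p α μ ρ) v + C := by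
  have hmatrix : μ • (Aᵀ * A + (1 + ρ / μ - α / μ) • (1 : Matrix n n 𝕜))
      = μ • (Aᵀ * A) + μ • 1 + ρ • 1 + (-α) • 1 + 0 := by
    have hcoeff : μ * (1 + ρ / μ - α / μ) = μ + ρ + -α := by
      field_simp
      ring
    rw [smul_add, smul_smul, hcoeff, add_smul, add_smul]
    abel
  refine ⟨μ / 2 * ((ϱ - e₁) ⬝ᵥ (ϱ - e₁)) - y₁ ⬝ᵥ (ϱ - e₁) + (μ / 2 * (e₂ ⬝ᵥ e₂) - y₂ ⬝ᵥ e₂)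
    + ρ / 2 * (p ⬝ᵥ p) + -α / 2 * ((fun _ => 1 / 2) ⬝ᵥ fun _ : n => 1 / 2), fun v => ?_⟩
  rw [← quadraticEnergy_smul_smul, hmatrix, smul_vUpdateRHS A lam ϱ e₁ y₁ e₂ y₂ p hμ]
  simp only [quadraticEnergy_add_add, quadraticEnergy_zero_neg, proximalObjective,
    augmentedLagrangian, ← sub_sub_eq_add_sub (A *ᵥ v) ϱ e₁]
  linear_combination multiplier_add_penalty_eq_quadraticEnergy A (ϱ - e₁) y₁ μ v
    + multiplier_add_penalty_eq_quadraticEnergy_smul_one e₂ y₂ μ v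
    + penalty_eq_quadraticEnergy_smul_one p ρ v
    + penalty_eq_quadraticEnergy_smul_one (fun _ => 1 / 2) (-α) v

end ProximalObjective

theorem v_update_closed_form_general {m n 𝕜 : Type*} [Fintype m] [Fintype n] [DecidableEq n]
    [Field 𝕜] [LinearOrder 𝕜] [IsStrictOrderedRing 𝕜] [StarRing 𝕜] [TrivialStar 𝕜]
    (A : Matrix m n 𝕜) (lam : n → 𝕜) (ϱ e₁ y₁ : m → 𝕜) (e₂ y₂ p : n → 𝕜) {α μ ρ : 𝕜}
    (hμ : 0 < μ) (hρμα : α < ρ + μ) {ε : 𝕜} (hε : ε = 1 + ρ / μ - α / μ)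
    {F : (n → 𝕜) → 𝕜} (hF : ∀ v, F v = proximalObjective A lam ϱ e₁ y₁ e₂ y₂ p α μ ρ v)
    {φ : n → 𝕜} (hφ : φ = vUpdateRHS A lam ϱ e₁ y₁ e₂ y₂ p α μ ρ) :
    (Aᵀ * A + ε • (1 : Matrix n n 𝕜)).PosDef ∧
    IsUnit (Aᵀ * A + ε • (1 : Matrix n n 𝕜)) ∧
    (∃! v : n → 𝕜, ∀ w, F v ≤ F w) ∧
    (∀ v : n → 𝕜, (∀ w, F v ≤ F w) ↔ (Aᵀ * A + ε • (1 : Matrix n n 𝕜)) *ᵥ v = φ) ∧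
    (∀ v : n → 𝕜, (∀ w, F v ≤ F w) ↔ v = (Aᵀ * A + ε • (1 : Matrix n n 𝕜))⁻¹ *ᵥ φ) := by
  have hε_pos : 0 < ε := by
    have hdiv : ε = (ρ + μ - α) / μ := by
      rw [hε]
      field_simp
      ring
    exact hdiv ▸ div_pos (sub_pos.2 hρμα) hμ
  have hPosDef := posDef_transpose_mul_self_add_smul_one A hε_pos
  obtain ⟨C, hC⟩ := exists_proximalObjective_eq_mul_quadraticEnergy_add A lam ϱ e₁ y₁ e₂ y₂ p
    (α := α) (ρ := ρ) hμ.ne'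
  have hsystem (v : n → 𝕜) :
      (∀ w, F v ≤ F w) ↔ (Aᵀ * A + ε • (1 : Matrix n n 𝕜)) *ᵥ v = φ := by
    rw [← forall_quadraticEnergy_le_iff hPosDef.posSemidef]
    simp only [hF, hC, ← hε, ← hφ, add_le_add_iff_right, mul_le_mul_iff_right₀ hμ]
  have hinverse (v : n → 𝕜) := (hsystem v).trans (mulVec_eq_iff_eq_inv_mulVec hPosDef.isUnit)
  exact ⟨hPosDef, hPosDef.isUnit, ⟨_, (hinverse _).2 rfl, fun v => (hinverse v).1⟩,
    hsystem, hinverse⟩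

/-- The closed-form `v`-update (34)–(35) of the proximal-ADMM decoder: with
`ε = 1 + ρ/μ − α/μ` and
`φ = Aᵀ(ϱ − e₁ − y₁/μ) + (e₂ − y₂/μ) + (ρ/μ)p − (1/μ)(λ + (α/2)𝟙)`,
the matrix `AᵀA + εI` is positive definite (hence invertible), the proximal objective
`F(v) = L_μ(v) + (ρ/2)‖v − p‖²` has a unique global minimizer `v*`, and `v*` is
characterized as the unique solution of `(AᵀA + εI)v = φ`, i.e. `v* = (AᵀA + εI)⁻¹φ`. -/
theorem v_update_closed_form (M N : ℕ) (A : Matrix (Fin M) (Fin N) ℝ)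
    (lam : Fin N → ℝ) (ϱ e₁ y₁ : Fin M → ℝ) (e₂ y₂ : Fin N → ℝ)
    (p : Fin N → ℝ) (α μ ρ ε : ℝ) (hμ : 0 < μ) (hα : 0 ≤ α) (hρμα : α < ρ + μ)
    (hε : ε = 1 + ρ / μ - α / μ)
    (L F : (Fin N → ℝ) → ℝ)
    (hL : ∀ v, L v =
      (∑ i, lam i * v i) - (α / 2) * ∑ i, (v i - 1 / 2) ^ 2
        + (∑ j, y₁ j * (A.mulVec v j + e₁ j - ϱ j)) + (∑ i, y₂ i * (v i - e₂ i))
        + (μ / 2) * (∑ j, (A.mulVec v j + e₁ j - ϱ j) ^ 2)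
        + (μ / 2) * ∑ i, (v i - e₂ i) ^ 2)
    (hF : ∀ v, F v = L v + (ρ / 2) * ∑ i, (v i - p i) ^ 2)
    (φ : Fin N → ℝ)
    (hφ : φ = Aᵀ.mulVec (fun j => ϱ j - e₁ j - y₁ j / μ)
        + (fun i => e₂ i - y₂ i / μ) + (ρ / μ) • p
        - (1 / μ) • fun i => lam i + α / 2) :
    (Aᵀ * A + ε • (1 : Matrix (Fin N) (Fin N) ℝ)).PosDef ∧
    IsUnit (Aᵀ * A + ε • (1 : Matrix (Fin N) (Fin N) ℝ)) ∧
    (∃! v : Fin N → ℝ, ∀ w, F v ≤ F w) ∧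
    (∀ v : Fin N → ℝ, (∀ w, F v ≤ F w) ↔
      (Aᵀ * A + ε • (1 : Matrix (Fin N) (Fin N) ℝ)).mulVec v = φ) ∧
    (∀ v : Fin N → ℝ, (∀ w, F v ≤ F w) ↔
      v = (Aᵀ * A + ε • (1 : Matrix (Fin N) (Fin N) ℝ))⁻¹.mulVec φ) := by
  refine v_update_closed_form_general A lam ϱ e₁ y₁ e₂ y₂ p hμ hρμα hε (fun v => ?_) hφ
  simp only [hF, hL, pow_two, proximalObjective, augmentedLagrangian]
  rfl
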